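/- Let γ ∈ (0,1], δ > 0, M > 0. Let ρ_α → ∞ and let v_α : [−ρ_α,ρ_α]×I → ℂⁿ be C¹ maps, and let v₊ : (−∞,0]×I → ℂⁿ be such that the map v₊^disk defined by v₊(s,t) = v₊^disk(e^{2π(s+it)}) extends to a C^{1,γ} map of the closed unit disk, with Taylor expansion v₊^disk(z) = v₊^disk(0) + f_z·z + f_{z̄}·conj(z) + O(|z|^{1+γ}) at 0. Write h_{α,1}(s) := ∫₀¹ v_α(s,t)e^{−2πit} dt, h_{+,1}(s) := ∫₀¹ v₊(s,t)e^{−2πit} dt, and b_{α,1}(s) := (1/2)(h_{α,1}′(s) − 2π h_{α,1}(s)). Assume: (i) for every s₀ > 0, sup_{s∈[−s₀,0]} |h_{α,1}(s+ρ_α) − h_{+,1}(s)| → 0 as α → ∞; (ii) sup_α ∫₁^{ρ_α} |b_{α,1}(σ)|² e^{2(2π+δ)(ρ_α−σ)} dσ ≤ M. Then lim_{α→∞} e^{2π(ρ_α−1)} h_{α,1}(1) = f_z. (Paper's Proposition 4.4, plus side, for the standard complex structure: the rescaled first Fourier coefficient at the middle of the neck converges to the complex-linear derivative of the limit disk at the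 node.) -/

import Mathlib

open MeasureTheory Real Set Filter

noncomputable section

abbrev Cn (n : ℕ) := EuclideanSpace ℂ (Fin n)

/-- Partial derivative in the `s`-direction. -/
def pdS {E : Type*} [NormedAddCommGroup E] [NormedSpace ℝ E] (f : ℝ × ℝ → E) (p : ℝ × ℝ) : E :=
  fderiv ℝ f p (1, 0)

/-- Partial derivative in the `t`-direction. -/
def pdT {E : Type*} [NormedAddCommGroup E] [NormedSpace ℝ E] (f : ℝ × ℝ → E) (p : ℝ × ℝ) : E :=
  fderiv ℝ f p (0, 1)

/-- The standard ∂̄-operator: ∂̄f = (1/2)(∂_s f + i ∂_t f). -/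
def dbar {E : Type*} [NormedAddCommGroup E] [NormedSpace ℂ E] (f : ℝ × ℝ → E) (p : ℝ × ℝ) : E :=
  (2⁻¹ : ℝ) • (pdS f p + Complex.I • pdT f p)

/-- `cexp s t = e^{2π(s+it)}`. -/
def cexp (s t : ℝ) : ℂ :=
  Complex.exp (((2 * π * s : ℝ) : ℂ) + ((2 * π * t : ℝ) : ℂ) * Complex.I)

/-- The `m`-th Fourier coefficient of `f` at `s`. -/
def fCoef {n : ℕ} (f : ℝ × ℝ → Cn n) (m : ℤ) (s : ℝ) : Cn n :=
  ∫ t in (0:ℝ)..1, Complex.exp (-(((2 * π * (m:ℝ) * t : ℝ) : ℂ) * Complex.I)) • f (s, t)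

/-- Unweighted Sobolev `k`-norm of `f` over `U`. -/
def sobNorm {E : Type*} [NormedAddCommGroup E] [NormedSpace ℝ E] (k : ℕ)
    (f : ℝ × ℝ → E) (U : Set (ℝ × ℝ)) : ℝ :=
  Real.sqrt (∫ p in U, ∑ j ∈ Finset.range (k + 1), ‖iteratedFDeriv ℝ j f p‖ ^ 2)

/-- Weighted Sobolev `(k,δ)`-norm of `f` over `U` with weight `e^{2δ|s|}`. -/
def sobNormW {E : Type*} [NormedAddCommGroup E] [NormedSpace ℝ E] (k : ℕ) (δ : ℝ)
    (f : ℝ × ℝ → E) (U : Set (ℝ × ℝ)) : ℝ :=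
  Real.sqrt (∫ p in U,
    (∑ j ∈ Finset.range (k + 1), ‖iteratedFDeriv ℝ j f p‖ ^ 2) * Real.exp (2 * δ * |p.1|))

/-- Hat-norm: weighted Sobolev `(k,δ)`-norm with weight `e^{2δ(r−|s|)}` (big in the middle). -/
def hatNorm {E : Type*} [NormedAddCommGroup E] [NormedSpace ℝ E] (k : ℕ) (δ r : ℝ)
    (f : ℝ × ℝ → E) (U : Set (ℝ × ℝ)) : ℝ :=
  Real.sqrt (∫ p in U,
    (∑ j ∈ Finset.range (k + 1), ‖iteratedFDeriv ℝ j f p‖ ^ 2) * Real.exp (2 * δ * (r - |p.1|)))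

theorem aux_deriv {n : ℕ} (f : ℝ × ℝ → Cn n) (hf : ContDiff ℝ 1 f) :
    ∃ d : ℝ → Cn n, Continuous d ∧ ∀ s, HasDerivAt (fun r => fCoef f 1 r) (d s) s := by
  have hfd : Continuous (fun p : ℝ × ℝ => fderiv ℝ f p (1, 0)) :=
    (hf.continuous_fderiv one_ne_zero).clm_apply continuous_const
  have hfc : Continuous f := hf.continuous
  set F : ℝ → ℝ → Cn n := fun s t =>
    Complex.exp (-(((2 * π * ((1:ℤ):ℝ) * t : ℝ) : ℂ) * Complex.I)) • f (s, t) with hF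
  set F' : ℝ → ℝ → Cn n := fun s t =>
    Complex.exp (-(((2 * π * ((1:ℤ):ℝ) * t : ℝ) : ℂ) * Complex.I)) • fderiv ℝ f (s, t) (1, 0)
    with hF'
  have hFc : Continuous F.uncurry := by
    simp only [hF, Function.uncurry_def]
    fun_prop
  have hFc' : Continuous F'.uncurry := by
    simp only [hF', Function.uncurry_def]
    have hce : Continuous (fun p : ℝ × ℝ =>
        Complex.exp (-(((2 * π * ((1:ℤ):ℝ) * p.2 : ℝ) : ℂ) * Complex.I))) := by fun_prop
    exact hce.smul hfd
  refine ⟨fun s => ∫ t in (0:ℝ)..1, F' s t, ?_, ?_⟩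
  · exact intervalIntegral.continuous_parametric_intervalIntegral_of_continuous' hFc' 0 1
  · intro s
    obtain ⟨C, hC⟩ := ((isCompact_Icc (a := s - 1) (b := s + 1)).prod
      (isCompact_Icc (a := (0:ℝ)) (b := 1))).exists_bound_of_continuousOn hFc'.continuousOn
    refine (intervalIntegral.hasDerivAt_integral_of_dominated_loc_of_deriv_le
      (F := F) (F' := F') (bound := fun _ => C) (s := Icc (s - 1) (s + 1)) (x₀ := s)
      (Icc_mem_nhds (by linarith) (by linarith)) ?_ ?_ ?_ ?_ ?_ ?_).2
    · refine Eventually.of_forall fun x => ?_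
      exact (hFc.comp (Continuous.prodMk continuous_const continuous_id)).aestronglyMeasurable
    · exact (hFc.comp (Continuous.prodMk continuous_const continuous_id)).intervalIntegrable _ _
    · exact (hFc'.comp (Continuous.prodMk continuous_const continuous_id)).aestronglyMeasurable
    · refine Eventually.of_forall fun t ht x hx => ?_
      rw [uIoc_of_le zero_le_one] at ht
      exact hC (x, t) ⟨hx, ht.1.le, ht.2⟩
    · exact intervalIntegrable_const
    · refine Eventually.of_forall fun t ht x hx => ?_
      have h1 : HasFDerivAt f (fderiv ℝ f (x, t)) (x, t) :=
        (hf.differentiable one_ne_zero (x, t)).hasFDerivAt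
      have h2 : HasDerivAt (fun x : ℝ => (x, t)) ((1:ℝ), (0:ℝ)) x :=
        (hasDerivAt_id x).prodMk (hasDerivAt_const x t)
      have h3 : HasDerivAt (fun x : ℝ => f (x, t)) (fderiv ℝ f (x, t) (1, 0)) x :=
        h1.comp_hasDerivAt x h2
      exact h3.const_smul (Complex.exp (-(((2 * π * ((1:ℤ):ℝ) * t : ℝ) : ℂ) * Complex.I)))

theorem aux_neck {E : Type*} [NormedAddCommGroup E] [NormedSpace ℝ E] [CompleteSpace E]
    (h d : ℝ → E) (hd : Continuous d)
    (hh : ∀ s, HasDerivAt h (d s) s) (δ M R s₀ : ℝ) (hδ : 0 < δ) (hs₀ : 0 ≤ s₀)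
    (hR : 1 ≤ R - s₀)
    (hint : (∫ σ in (1:ℝ)..R, ‖(2⁻¹ : ℝ) • (d σ - (2 * π) • h σ)‖ ^ 2 *
        Real.exp (2 * (2 * π + δ) * (R - σ))) ≤ M) :
    ‖Real.exp (2 * π * s₀) • h (R - s₀) - Real.exp (2 * π * (R - 1)) • h 1‖
      ≤ Real.exp (-δ * s₀) * (M + 1 / (2 * δ)) := by
  have hhc : Continuous h := continuous_iff_continuousAt.2 fun s => (hh s).continuousAt
  have hg : ∀ s, HasDerivAt (fun s => Real.exp (2 * π * (R - s)) • h s)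
      (Real.exp (2 * π * (R - s)) • (d s - (2 * π) • h s)) s := by
    intro s
    have h1 : HasDerivAt (fun s => Real.exp (2 * π * (R - s)))
        (Real.exp (2 * π * (R - s)) * (2 * π * (-1))) s :=
      (((hasDerivAt_id s).const_sub R).const_mul (2 * π)).exp
    refine (h1.smul (hh s)).congr_deriv ?_
    module
  have hFTC := intervalIntegral.integral_eq_sub_of_hasDerivAt (a := 1) (b := R - s₀)
    (fun x _ => hg x) (Continuous.intervalIntegrable (by fun_prop) _ _)
  have e1 : R - (R - s₀) = s₀ := by ring
  simp only [e1] at hFTC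
  rw [← hFTC]
  set B : ℝ → ℝ := fun σ => ‖(2⁻¹ : ℝ) • (d σ - (2 * π) • h σ)‖ ^ 2 *
        Real.exp (2 * (2 * π + δ) * (R - σ)) with hB
  have hBc : Continuous B := by simp only [hB]; fun_prop
  have hEc : Continuous fun σ => Real.exp (-(2 * δ) * (R - σ)) := by fun_prop
  have hle := intervalIntegral.norm_integral_le_of_norm_le (μ := volume) (a := 1) (b := R - s₀)
    (f := fun s => Real.exp (2 * π * (R - s)) • (d s - (2 * π) • h s))
    (g := fun σ => Real.exp (-δ * s₀) * B σ + Real.exp (δ * s₀) * Real.exp (-(2 * δ) * (R - σ)))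
    hR (Eventually.of_forall fun σ _ => ?_)
    (Continuous.intervalIntegrable (by fun_prop) _ _)
  · refine hle.trans ?_
    rw [intervalIntegral.integral_add
      (Continuous.intervalIntegrable (by fun_prop) _ _)
      (Continuous.intervalIntegrable (by fun_prop) _ _),
      intervalIntegral.integral_const_mul, intervalIntegral.integral_const_mul]
    have i1 : ∫ σ in (1:ℝ)..(R - s₀), B σ ≤ M := by
      refine le_trans ?_ hint
      refine intervalIntegral.integral_mono_interval le_rfl hR (by linarith)
        (Eventually.of_forall fun σ => ?_) (hBc.intervalIntegrable _ _)
      simp only [hB, Pi.zero_apply]; positivity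
    have i2 : ∫ σ in (1:ℝ)..(R - s₀), Real.exp (-(2 * δ) * (R - σ))
        ≤ Real.exp (-(2 * δ) * s₀) / (2 * δ) := by
      have hder : ∀ σ : ℝ, HasDerivAt (fun σ => Real.exp (-(2 * δ) * (R - σ)) / (2 * δ))
          (Real.exp (-(2 * δ) * (R - σ))) σ := by
        intro σ
        have := ((((hasDerivAt_id σ).const_sub R).const_mul (-(2 * δ))).exp).div_const (2 * δ)
        refine this.congr_deriv ?_
        simp only [id]
        field_simp
      rw [intervalIntegral.integral_eq_sub_of_hasDerivAt (fun x _ => hder x)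
        (hEc.intervalIntegrable _ _), e1]
      have : 0 ≤ Real.exp (-(2 * δ) * (R - 1)) / (2 * δ) := by positivity
      linarith
    have i3 : Real.exp (δ * s₀) * (Real.exp (-(2 * δ) * s₀) / (2 * δ))
        = Real.exp (-δ * s₀) * (1 / (2 * δ)) := by
      rw [← mul_div_assoc, ← Real.exp_add]
      rw [show δ * s₀ + -(2 * δ) * s₀ = -δ * s₀ by ring]
      ring
    rw [mul_add, ← i3]
    gcongr
  · simp only [hB]
    rw [norm_smul, norm_smul, Real.norm_of_nonneg (Real.exp_pos _).le,
      Real.norm_of_nonneg (by norm_num : (0:ℝ) ≤ 2⁻¹)]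
    set x := ‖d σ - (2 * π) • h σ‖
    have hx : 0 ≤ x := norm_nonneg _
    have e2 : Real.exp (-δ * s₀) * ((2⁻¹ * x) ^ 2 * Real.exp (2 * (2 * π + δ) * (R - σ)))
        = (2⁻¹ * x * Real.exp (-δ * s₀ / 2 + (2 * π + δ) * (R - σ))) ^ 2 := by
      rw [mul_pow (2⁻¹ * x), ← Real.exp_nat_mul, mul_left_comm, ← Real.exp_add]
      congr 2; push_cast; ring
    have e3 : Real.exp (δ * s₀) * Real.exp (-(2 * δ) * (R - σ))
        = (Real.exp (δ * s₀ / 2 - δ * (R - σ))) ^ 2 := by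
      rw [← Real.exp_nat_mul, ← Real.exp_add]
      congr 1; push_cast; ring
    have e4 : Real.exp (2 * π * (R - σ)) =
        Real.exp (-δ * s₀ / 2 + (2 * π + δ) * (R - σ)) * Real.exp (δ * s₀ / 2 - δ * (R - σ)) := by
      rw [← Real.exp_add]; congr 1; ring
    rw [e2, e3, e4]
    nlinarith [sq_nonneg (2⁻¹ * x * Real.exp (-δ * s₀ / 2 + (2 * π + δ) * (R - σ))
      - Real.exp (δ * s₀ / 2 - δ * (R - σ)))]

theorem aux_disk {n : ℕ} (vp : ℝ × ℝ → Cn n) (hvp : Continuous vp) (vdisk : ℂ → Cn n)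
    (hrel : ∀ s t : ℝ, s ≤ 0 → vp (s, t) = vdisk (cexp s t))
    (fz fzb : Cn n) (γ M₂ : ℝ)
    (hT : ∀ z : ℂ, ‖z‖ ≤ 1 →
      ‖vdisk z - vdisk 0 - z • fz - (starRingEnd ℂ z) • fzb‖ ≤ M₂ * ‖z‖ ^ ((1:ℝ) + γ))
    (s₀ : ℝ) (hs₀ : 0 ≤ s₀) :
    ‖Real.exp (2 * π * s₀) • fCoef vp 1 (-s₀) - fz‖ ≤ M₂ * Real.exp (-(2 * π * γ) * s₀) := by
  have hpi := Real.pi_pos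
  have hnorm : ∀ t, ‖cexp (-s₀) t‖ = Real.exp (-(2 * π * s₀)) := by
    intro t
    rw [cexp, Complex.norm_exp]
    simp
  have hle1 : ∀ t, ‖cexp (-s₀) t‖ ≤ 1 := by
    intro t
    rw [hnorm, Real.exp_le_one_iff]
    have : 0 ≤ 2 * π * s₀ := by positivity
    linarith
  set c : ℝ → ℂ := fun t => Complex.exp (-(((2 * π * ((1:ℤ):ℝ) * t : ℝ) : ℂ) * Complex.I)) with hc
  have hcc : Continuous c := by simp only [hc]; fun_prop
  have hcn : ∀ t, ‖c t‖ = 1 := by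
    intro t
    simp only [hc]
    rw [Complex.norm_exp]; simp
  set A : ℂ := ((Real.exp (-(2 * π * s₀)) : ℝ) : ℂ) with hA
  have hcz : ∀ t, c t * cexp (-s₀) t = A := by
    intro t
    simp only [hc, hA, cexp]
    rw [← Complex.exp_add, Complex.ofReal_exp]
    congr 1; push_cast; ring
  have hczb : ∀ t, c t * (starRingEnd ℂ) (cexp (-s₀) t)
      = A * Complex.exp ((-4 * π * Complex.I) * (t : ℂ)) := by
    intro t
    simp only [hc, hA, cexp]
    rw [← Complex.exp_conj, ← Complex.exp_add, Complex.ofReal_exp, ← Complex.exp_add]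
    congr 1
    simp only [map_add, map_mul, Complex.conj_ofReal, Complex.conj_I]
    push_cast; ring
  have hc0 : ∀ t, c t = Complex.exp ((-2 * π * Complex.I) * (t : ℂ)) := by
    intro t
    simp only [hc]
    congr 1; push_cast; ring
  have hpiC : (π : ℂ) ≠ 0 := by exact_mod_cast hpi.ne'
  have I1 : ∫ t in (0:ℝ)..1, c t = 0 := by
    simp only [hc0]
    rw [integral_exp_mul_complex (by simp [hpiC])]
    have : Complex.exp (-2 * π * Complex.I * ((1:ℝ):ℂ)) = 1 := by
      rw [Complex.exp_eq_one_iff]; exact ⟨-1, by push_cast; ring⟩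
    rw [this]; simp
  have I2 : ∫ t in (0:ℝ)..1, c t * (starRingEnd ℂ) (cexp (-s₀) t) = 0 := by
    simp only [hczb]
    rw [intervalIntegral.integral_const_mul, integral_exp_mul_complex (by simp [hpiC])]
    have : Complex.exp (-4 * π * Complex.I * ((1:ℝ):ℂ)) = 1 := by
      rw [Complex.exp_eq_one_iff]; exact ⟨-2, by push_cast; ring⟩
    rw [this]; simp
  have hz : Continuous (fun t => cexp (-s₀) t) := by simp only [cexp]; fun_prop
  have hv : Continuous (fun t => vp (-s₀, t)) := by fun_prop
  have hzb : Continuous (fun t => (starRingEnd ℂ) (cexp (-s₀) t)) :=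
    Complex.continuous_conj.comp hz
  -- the remainder
  have key : ∫ t in (0:ℝ)..1, c t • (vp (-s₀, t) - vdisk 0 - cexp (-s₀) t • fz
      - (starRingEnd ℂ (cexp (-s₀) t)) • fzb) = fCoef vp 1 (-s₀) - A • fz := by
    have : ∀ t, c t • (vp (-s₀, t) - vdisk 0 - cexp (-s₀) t • fz
      - (starRingEnd ℂ (cexp (-s₀) t)) • fzb) =
        c t • vp (-s₀, t) - c t • vdisk 0 - A • fz
          - (c t * (starRingEnd ℂ (cexp (-s₀) t))) • fzb := by
      intro t
      rw [smul_sub, smul_sub, smul_sub, smul_smul, smul_smul, hcz]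
    simp only [this]
    rw [intervalIntegral.integral_sub (Continuous.intervalIntegrable (by fun_prop) _ _)
        (Continuous.intervalIntegrable (by fun_prop) _ _),
      intervalIntegral.integral_sub (Continuous.intervalIntegrable (by fun_prop) _ _)
        (Continuous.intervalIntegrable (by fun_prop) _ _),
      intervalIntegral.integral_sub (Continuous.intervalIntegrable (by fun_prop) _ _)
        (Continuous.intervalIntegrable (by fun_prop) _ _),
      intervalIntegral.integral_smul_const c (vdisk 0),
      intervalIntegral.integral_smul_const (fun t => c t * (starRingEnd ℂ) (cexp (-s₀) t)) fzb,
      I1, I2]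
    simp [fCoef, hc]
  have hb : ‖fCoef vp 1 (-s₀) - A • fz‖
      ≤ M₂ * Real.exp (-(2 * π * s₀)) ^ ((1:ℝ) + γ) := by
    rw [← key]
    have := intervalIntegral.norm_integral_le_of_norm_le_const (a := (0:ℝ)) (b := 1)
      (C := M₂ * Real.exp (-(2 * π * s₀)) ^ ((1:ℝ) + γ))
      (f := fun t => c t • (vp (-s₀, t) - vdisk 0 - cexp (-s₀) t • fz
      - (starRingEnd ℂ (cexp (-s₀) t)) • fzb)) ?_
    · simpa using this
    · intro t _
      rw [norm_smul, hcn, one_mul, hrel _ _ (by linarith), ← hnorm t]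
      exact hT _ (hle1 t)
  have e : Real.exp (2 * π * s₀) • fCoef vp 1 (-s₀) - fz
      = Real.exp (2 * π * s₀) • (fCoef vp 1 (-s₀) - A • fz) := by
    rw [smul_sub, hA, Complex.coe_smul, smul_smul, ← Real.exp_add]
    simp
  rw [e, norm_smul, Real.norm_of_nonneg (Real.exp_pos _).le]
  refine (mul_le_mul_of_nonneg_left hb (Real.exp_pos _).le).trans (le_of_eq ?_)
  rw [← Real.exp_mul, mul_left_comm, ← Real.exp_add]
  congr 2; ring

theorem stmt_6 (n : ℕ) (hn : 1 ≤ n) (γ δ M : ℝ)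
    (hγ0 : 0 < γ) (hγ1 : γ ≤ 1) (hδ : 0 < δ) (hM : 0 < M)
    (ρ : ℕ → ℝ) (hρ : Tendsto ρ atTop atTop)
    (vα : ℕ → ℝ × ℝ → Cn n) (hvα : ∀ α, ContDiff ℝ 1 (vα α))
    (hperα : ∀ α, ∀ s t : ℝ, vα α (s, t + 1) = vα α (s, t))
    (vp : ℝ × ℝ → Cn n) (hvp : ContDiff ℝ 1 vp)
    (hperp : ∀ s t : ℝ, vp (s, t + 1) = vp (s, t))
    (vdisk : ℂ → Cn n)
    (hrel : ∀ s t : ℝ, s ≤ 0 → vp (s, t) = vdisk (cexp s t))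
    (hC1 : ContDiff ℝ 1 vdisk)
    (hHolder : ∃ C : ℝ, ∀ z w : ℂ, ‖z‖ ≤ 1 → ‖w‖ ≤ 1 →
      ‖fderiv ℝ vdisk z - fderiv ℝ vdisk w‖ ≤ C * ‖z - w‖ ^ γ)
    (fz fzb : Cn n)
    (hTaylor : ∃ M₂ : ℝ, ∀ z : ℂ, ‖z‖ ≤ 1 →
      ‖vdisk z - vdisk 0 - z • fz - (starRingEnd ℂ z) • fzb‖ ≤ M₂ * ‖z‖ ^ ((1:ℝ) + γ))
    -- (i): local uniform convergence of the first Fourier coefficients near the plus end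
    (hi : ∀ s₀ : ℝ, 0 < s₀ → ∀ η : ℝ, 0 < η → ∀ᶠ α in atTop, ∀ s ∈ Icc (-s₀) (0:ℝ),
      ‖fCoef (vα α) 1 (s + ρ α) - fCoef vp 1 s‖ ≤ η)
    -- (ii): weighted bound on the first Fourier mode of ∂̄v_α
    (hii : ∀ α, (∫ σ in (1:ℝ)..(ρ α),
      ‖(2⁻¹ : ℝ) • (deriv (fun r => fCoef (vα α) 1 r) σ - (2 * π) • fCoef (vα α) 1 σ)‖ ^ 2 *
        Real.exp (2 * (2 * π + δ) * (ρ α - σ))) ≤ M) :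
    Tendsto (fun α => Real.exp (2 * π * (ρ α - 1)) • fCoef (vα α) 1 1) atTop (nhds fz) := by
  obtain ⟨M₂, hT⟩ := hTaylor
  rw [Metric.tendsto_atTop']
  intro ε hε
  have hpi := Real.pi_pos
  have hexp : ∀ a : ℝ, 0 < a → Tendsto (fun x : ℝ => Real.exp (-a * x)) atTop (nhds 0) := by
    intro a ha
    refine Real.tendsto_exp_atBot.comp ?_
    exact tendsto_id.const_mul_atTop_of_neg (by linarith)
  have t1 := (hexp δ hδ).mul_const (M + 1 / (2 * δ))
  have t2 := (hexp (2 * π * γ) (by positivity)).const_mul M₂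
  rw [zero_mul] at t1
  rw [mul_zero] at t2
  have hε3 : 0 < ε / 3 := by positivity
  obtain ⟨s₀, hs₀, h1, h2⟩ := ((eventually_gt_atTop (0:ℝ)).and
    ((t1.eventually_lt_const hε3).and (t2.eventually_lt_const hε3))).exists
  have hη : 0 < ε / 3 * Real.exp (-(2 * π * s₀)) := by positivity
  have hev := (hi s₀ hs₀ _ hη).and (hρ.eventually_ge_atTop (1 + s₀))
  obtain ⟨N, hN⟩ := eventually_atTop.1 hev
  refine ⟨N, fun α hα => ?_⟩
  obtain ⟨hα1, hα2⟩ := hN α hα.le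
  obtain ⟨d, hdc, hd⟩ := aux_deriv (vα α) (hvα α)
  have hbound := hii α
  have hdd : deriv (fun r => fCoef (vα α) 1 r) = d := funext fun s => (hd s).deriv
  rw [hdd] at hbound
  have b1 := aux_neck (fun r => fCoef (vα α) 1 r) d hdc hd δ M (ρ α) s₀ hδ hs₀.le
    (by linarith) hbound
  have b2 := aux_disk vp hvp.continuous vdisk hrel fz fzb γ M₂ hT s₀ hs₀.le
  have b3 := hα1 (-s₀) ⟨le_rfl, by linarith⟩
  rw [show -s₀ + ρ α = ρ α - s₀ by ring] at b3
  have b4 : ‖Real.exp (2 * π * s₀) • (fCoef (vα α) 1 (ρ α - s₀) - fCoef vp 1 (-s₀))‖ ≤ ε / 3 := by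
    rw [norm_smul, Real.norm_of_nonneg (Real.exp_pos _).le]
    refine (mul_le_mul_of_nonneg_left b3 (Real.exp_pos _).le).trans (le_of_eq ?_)
    rw [mul_left_comm, ← Real.exp_add]
    simp
  rw [dist_eq_norm]
  have e : Real.exp (2 * π * (ρ α - 1)) • fCoef (vα α) 1 1 - fz
      = -(Real.exp (2 * π * s₀) • fCoef (vα α) 1 (ρ α - s₀)
          - Real.exp (2 * π * (ρ α - 1)) • fCoef (vα α) 1 1)
        + Real.exp (2 * π * s₀) • (fCoef (vα α) 1 (ρ α - s₀) - fCoef vp 1 (-s₀))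
        + (Real.exp (2 * π * s₀) • fCoef vp 1 (-s₀) - fz) := by
    rw [smul_sub]; abel
  rw [e]
  refine (norm_add₃_le).trans_lt ?_
  rw [norm_neg]
  linarith
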